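/- Let σ be a relational first-order language and let M and N be countable σ-structures that are H-equivalent. Then M is HH-homogeneous if and only if N is HH-homogeneous. -/

import Mathlib

open FirstOrder Language Structure

universe u v w

variable {L : FirstOrder.Language.{u, v}}

/-- `M` is HH-homogeneous: every homomorphism between finite substructures of `M`
extends to an endomorphism of `M`. -/
def IsHHHomogeneous (L : FirstOrder.Language.{u, v}) (M : Type w) [L.Structure M] : Prop :=
  ∀ (A B : L.Substructure M), (A : Set M).Finite → (B : Set M).Finite →
    ∀ f : A →[L] B, ∃ g : M →[L] M, ∀ a : A, g (a : M) = (f a : M)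

/-- Every embedding from a finite substructure of `M` into `N` extends to a
homomorphism `M → N`. -/
def HomExtendable (L : FirstOrder.Language.{u, v}) (M N : Type w)
    [L.Structure M] [L.Structure N] : Prop :=
  ∀ A : L.Substructure M, (A : Set M).Finite →
    ∀ f : A ↪[L] N, ∃ g : M →[L] N, ∀ a : A, g (a : M) = f a

/-- `f` preserves relations on tuples from `S`. -/
def PHom (L : FirstOrder.Language.{u, v}) {N : Type w} [L.Structure N] (S : Set N) (f : N → N) :
    Prop :=
  ∀ (n : ℕ) (R : L.Relations n) (x : Fin n → N), (∀ i, x i ∈ S) → RelMap R x →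
    RelMap R (fun i => f (x i))

/-- In a relational language every set is a substructure. -/
def setSub (L : FirstOrder.Language.{u, v}) [L.IsRelational] {N : Type w} [L.Structure N]
    (S : Set N) : L.Substructure N := ⟨S, fun f => isEmptyElim f⟩

theorem phom_step (L : FirstOrder.Language.{u, v}) [L.IsRelational]
    (M N : Type w) [L.Structure M] [L.Structure N]
    (hage : ∀ (B : Type w) [L.Structure B], Finite B →
      (Nonempty (B ↪[L] M) ↔ Nonempty (B ↪[L] N)))
    (hMN : HomExtendable L M N) (hM : IsHHHomogeneous L M)
    (S T : Set N) (hST : S ⊆ T) (hT : T.Finite) (f : N → N) (hf : PHom L S f) :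
    ∃ f' : N → N, PHom L T f' ∧ ∀ x ∈ S, f' x = f x := by
  classical
  have hTf : Finite (setSub L T) := hT
  have hBf : Finite (setSub L (f '' S)) := (hT.subset hST).image f
  obtain ⟨e⟩ := (hage (setSub L T) hTf).2 ⟨(setSub L T).subtype⟩
  obtain ⟨d⟩ := (hage (setSub L (f '' S)) hBf).2 ⟨(setSub L (f '' S)).subtype⟩
  let A0 : L.Substructure M := setSub L (e '' {t | (t : N) ∈ S})
  have hA0 : (A0 : Set M).Finite := (Set.toFinite {t : setSub L T | (t : N) ∈ S}).image e
  let B0 : L.Substructure M := setSub L (Set.range d)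
  have hB0 : (B0 : Set M).Finite := Set.finite_range d
  have hpre : ∀ a : A0, ∃ t : setSub L T, (t : N) ∈ S ∧ e t = a := fun a => a.2
  choose p hpS hpe using hpre
  let φ : A0 →[L] B0 :=
    { toFun := fun a => ⟨d ⟨f (p a), ⟨p a, hpS a, rfl⟩⟩, ⟨_, rfl⟩⟩
      map_fun' := fun f => isEmptyElim f
      map_rel' := by
        intro n R x hx
        have h1 : RelMap R (fun i => e (p (x i))) := by
          have : (fun i => e (p (x i))) = fun i => (x i : M) := by
            funext i; exact hpe _
          rw [this]; exact hx
        have h2 : RelMap R (fun i => p (x i)) := (e.map_rel R (fun i => p (x i))).1 h1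
        have h3 : RelMap R (fun i => f (p (x i))) := hf n R _ (fun i => hpS _) h2
        exact (d.map_rel R
          (fun i => (⟨f (p (x i)), ⟨p (x i), hpS _, rfl⟩⟩ : setSub L (f '' S)))).2 h3 }
  obtain ⟨g, hg⟩ := hM A0 B0 hA0 hB0 φ
  have hR : ((d.toHom.range : L.Substructure M) : Set M).Finite := by
    rw [Hom.range_coe]; exact Set.finite_range d
  obtain ⟨h, hh⟩ := hMN d.toHom.range hR
    ((setSub L (f '' S)).subtype.comp d.equivRange.symm.toEmbedding)
  have hhd : ∀ b : setSub L (f '' S), h (d b) = b := by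
    intro b
    have := hh (d.equivRange b)
    simpa using this
  refine ⟨fun x => if hx : x ∈ T then h (g (e ⟨x, hx⟩)) else x, ?_, ?_⟩
  · intro n R x hx hR
    have h1 : RelMap R (fun i => (⟨x i, hx i⟩ : setSub L T)) := hR
    have h2 := h.map_rel R _ (g.map_rel R _ ((e.map_rel R _).2 h1))
    convert h2 using 2 with i
    simp [hx i]
  · intro x hx
    have hxT := hST hx
    simp only [hxT, dif_pos]
    have h1 := hg ⟨e ⟨x, hxT⟩, ⟨⟨x, hxT⟩, hx, rfl⟩⟩
    have h2 : p ⟨e ⟨x, hxT⟩, ⟨⟨x, hxT⟩, hx, rfl⟩⟩ = ⟨x, hxT⟩ := e.injective (hpe _)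
    have h3 : g (e ⟨x, hxT⟩) = d ⟨f x, ⟨x, hx, rfl⟩⟩ := by
      refine h1.trans ?_
      change d _ = d _
      congr 2
      rw [h2]
    rw [h3, hhd]

theorem hh_forward (L : FirstOrder.Language.{u, v}) [L.IsRelational]
    (M N : Type w) [L.Structure M] [L.Structure N] [Countable N]
    (hage : ∀ (B : Type w) [L.Structure B], Finite B →
      (Nonempty (B ↪[L] M) ↔ Nonempty (B ↪[L] N)))
    (hMN : HomExtendable L M N) (hM : IsHHHomogeneous L M) : IsHHHomogeneous L N := by
  classical
  intro A B hA hB f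
  obtain ⟨c, hc⟩ := exists_injective_nat N
  let T : ℕ → Set N := fun n => (A : Set N) ∪ {x | c x < n}
  have hT : ∀ n, (T n).Finite := fun n =>
    hA.union ((Set.finite_Iio n).preimage hc.injOn)
  have hmono : ∀ n, T n ⊆ T (n + 1) := by
    rintro n x (hx | hx)
    · exact Or.inl hx
    · exact Or.inr (Nat.lt_succ_of_lt hx)
  let f0 : N → N := fun x => if hx : x ∈ A then (f ⟨x, hx⟩ : N) else x
  have hf0 : PHom L (A : Set N) f0 := by
    intro n R x hx hR
    have h1 : RelMap R (fun i => (⟨x i, hx i⟩ : A)) := hR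
    have h2 : RelMap R (fun i => (f ⟨x i, hx i⟩ : N)) := f.map_rel R _ h1
    convert h2 using 2 with i
    exact dif_pos (hx i)
  obtain ⟨f1, hf1, hf10⟩ := phom_step L M N hage hMN hM (A : Set N) (T 0)
    Set.subset_union_left (hT 0) f0 hf0
  have step : ∀ (n : ℕ) (F : {F : N → N // PHom L (T n) F}),
      ∃ F' : {F : N → N // PHom L (T (n + 1)) F}, ∀ x ∈ T n, F'.1 x = F.1 x := by
    intro n F
    obtain ⟨F', h1, h2⟩ := phom_step L M N hage hMN hM (T n) (T (n + 1)) (hmono n)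
      (hT _) F.1 F.2
    exact ⟨⟨F', h1⟩, h2⟩
  choose nx hnx using step
  let F : (n : ℕ) → {F : N → N // PHom L (T n) F} := fun n => Nat.rec ⟨f1, hf1⟩ nx n
  have hF : ∀ n, ∀ x ∈ T n, (F (n + 1)).1 x = (F n).1 x := fun n => hnx n (F n)
  have hle : ∀ m n, m ≤ n → ∀ x ∈ T m, x ∈ T n ∧ (F n).1 x = (F m).1 x := by
    intro m n hmn x hx
    induction n, hmn using Nat.le_induction with
    | base => exact ⟨hx, rfl⟩
    | succ k hk ih => exact ⟨hmono _ ih.1, (hF k x ih.1).trans ih.2⟩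
  have hself : ∀ x, x ∈ T (c x + 1) := fun x => Or.inr (Nat.lt_succ_self _)
  refine ⟨{ toFun := fun x => (F (c x + 1)).1 x
            map_fun' := fun f => isEmptyElim f
            map_rel' := ?_ }, ?_⟩
  · intro n R x hR
    let K := Finset.univ.sup (fun i => c (x i) + 1)
    have hK : ∀ i, c (x i) + 1 ≤ K := fun i =>
      Finset.le_sup (f := fun i => c (x i) + 1) (Finset.mem_univ i)
    have h1 := (F K).2 n R x (fun i => (hle _ _ (hK i) _ (hself _)).1) hR
    convert h1 using 2 with i
    exact (hle _ _ (hK i) _ (hself _)).2.symm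
  · intro a
    have h1 := (hle 0 (c a + 1) (Nat.zero_le _) a (Or.inl a.2)).2
    refine h1.trans ((hf10 a a.2).trans ?_)
    exact dif_pos a.2

theorem hh_homogeneous_iff_of_h_equivalent (L : FirstOrder.Language.{u, v}) [L.IsRelational]
    (M N : Type w) [L.Structure M] [L.Structure N] [Countable M] [Countable N]
    (hage : ∀ (B : Type w) [L.Structure B], Finite B →
      (Nonempty (B ↪[L] M) ↔ Nonempty (B ↪[L] N)))
    (hMN : HomExtendable L M N) (hNM : HomExtendable L N M) :
    IsHHHomogeneous L M ↔ IsHHHomogeneous L N := by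
  exact ⟨hh_forward L M N hage hMN, hh_forward L N M (fun B _ hB => (hage B hB).symm) hNM⟩
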